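/- arXiv:2409.04028 — 2 statements merged into one kernel-verified Lean document; each statement's English description precedes it below -/
import Mathlib

section
/- Let f : 𝔹 → ℂ be holomorphic, F(x) = f(x)·x and assume F is biholomorphic on 𝔹 (so F is of the form a + f(x)x with a = 0; the same statement holds for F(x) = a + f(x)x with a ∈ X). Then (1/4)·‖DF(0)‖ ≤ dist(F(0), ∂F(𝔹)), where DF(0) is the Fréchet derivative of F at 0 and dist(F(0), ∂F(𝔹)) is the distance from F(0) to the boundary of the image F(𝔹). -/
open Metric Set

noncomputable section

/-- A holomorphic map is biholomorphic on an open set `s` if it is holomorphic and injective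
on `s` and admits a holomorphic inverse on the image `f '' s`. -/
def IsBiholoOn {E₁ E₂ : Type*} [NormedAddCommGroup E₁] [NormedSpace ℂ E₁]
    [NormedAddCommGroup E₂] [NormedSpace ℂ E₂] (f : E₁ → E₂) (s : Set E₁) : Prop :=
  DifferentiableOn ℂ f s ∧ Set.InjOn f s ∧
    ∃ g : E₂ → E₁, DifferentiableOn ℂ g (f '' s) ∧ ∀ x ∈ s, g (f x) = x

open Filter MeasureTheory Topology
open scoped ComplexConjugate ENNReal Real

/-!
On each complex line through the origin, `x ↦ f x • x` is an injective holomorphic function of the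
unit disc with derivative `f 0` at the centre, so the Koebe quarter theorem shows that the image
contains the ball of radius `‖f 0‖ / 4`. The image is not the whole space: otherwise the preimage
of a closed disc of radius `‖f 0‖` in such a line would be compact, and the maximum principle for
the inverse of the difference quotient would give `‖f 0‖ < ‖f 0‖`.

The quarter theorem follows, as usual, from Bieberbach's inequality, and that from the area theorem:
if `φ z = z⁻¹ + h z` is injective, then `‖h' 0‖ ≤ 1`. To avoid computing the area enclosed by a
curve, normalize `h 0 = 0`, put `β = h' 0` and note that `φ` maps the circle of radius `r` into the
ellipse `‖v - β r² conj v‖ ≤ 1 / r + o(r)`. By the maximum principle, applied with a functional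
separating a point from the ellipse, `φ` also maps the annulus `r < ‖z‖ < 1` into it. Comparing
areas, with a lower bound for the area of the image from polar coordinates and the mean value
property, and letting `r → 0` gives `‖β‖² - 1 ≤ 0`.
-/

theorem exists_mem_frontier_re_le {E : Type*} [NormedAddCommGroup E] [NormedSpace ℂ E]
    [FiniteDimensional ℂ E] [Nontrivial E] {H : E → ℂ} {U : Set E} (hU : Bornology.IsBounded U)
    (hH : DiffContOnCl ℂ H U) {c : E} (hc : c ∈ U) :
    ∃ z ∈ frontier U, (H z).re ≤ (H c).re := by
  have hexp : DiffContOnCl ℂ (fun z => Complex.exp (-H z)) U :=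
    Complex.differentiable_exp.comp_diffContOnCl hH.neg
  obtain ⟨z, hz, hmax⟩ := Complex.exists_mem_frontier_isMaxOn_norm hU ⟨c, hc⟩ hexp
  have hle : ‖Complex.exp (-H c)‖ ≤ ‖Complex.exp (-H z)‖ := hmax (subset_closure hc)
  exact ⟨z, hz, by simpa [Complex.norm_exp] using hle⟩

theorem mem_of_convex_of_pole {U : Set ℂ} (hUo : IsOpen U) (hUb : Bornology.IsBounded U)
    (hU0 : (0 : ℂ) ∈ U) {p : ℂ → ℂ} (hp : DiffContOnCl ℂ p U) {C : Set ℂ} (hCconv : Convex ℝ C)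
    (hCclosed : IsClosed C) (hpC : ∀ z ∈ frontier U, p z / z ∈ C) {w : ℂ}
    (hw : ∀ z ∈ closure U, p z ≠ z * w) : w ∈ C := by
  by_contra hwC
  obtain ⟨f, u, hfw, hfC⟩ :=
    RCLike.geometric_hahn_banach_point_closed (𝕜 := ℂ) hCconv hCclosed hwC
  have hf : ∀ v, f v = v * f 1 := fun v => by simpa using f.map_smul v 1
  have hdenom : DiffContOnCl ℂ (fun z => p z - z * w) U :=
    hp.sub (differentiable_id.mul_const w).diffContOnCl
  -- With `v = p z / z - w`, the function `q` equals `conj (f v) / ‖v‖ ^ 2`, so `0 < re q` on the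
  -- frontier, although `q 0 = 0`.
  let q : ℂ → ℂ := fun z => conj (f 1) * (z * (p z - z * w)⁻¹)
  have hq : DiffContOnCl ℂ q U :=
    (differentiable_id.diffContOnCl.smul
      (hdenom.inv fun z hz => sub_ne_zero.2 (hw z hz))).const_smul (conj (f 1))
  obtain ⟨z, hz, hqz⟩ := exists_mem_frontier_re_le hUb hq hU0
  have hz0 : z ≠ 0 := by
    rintro rfl
    exact (hUo.frontier_eq ▸ hz).2 hU0
  have hv : p z / z - w ≠ 0 := fun h =>
    hw z (frontier_subset_closure hz) (by field_simp at h; linear_combination h)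
  have hfv : 0 < ((p z / z - w) * f 1).re := by
    rw [← hf, map_sub, Complex.sub_re]
    exact sub_pos.2 (hfw.trans (hfC _ (hpC z hz)))
  have hqv : q z = conj ((p z / z - w) * f 1) * ((Complex.normSq (p z / z - w))⁻¹ : ℝ) := by
    have hinv : z * (p z - z * w)⁻¹ = (p z / z - w)⁻¹ := by field_simp
    rw [map_mul, mul_assoc, mul_left_comm, ← Complex.inv_def, ← hinv]
  have hq0 : q 0 = 0 := by simp [q]
  rw [hqv, hq0, Complex.re_mul_ofReal, Complex.conj_re, Complex.zero_re] at hqz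
  have : 0 < ((p z / z - w) * f 1).re * (Complex.normSq (p z / z - w))⁻¹ :=
    mul_pos hfv (inv_pos.2 (Complex.normSq_pos.2 hv))
  linarith

theorem image_annulus_subset_of_convex {h : ℂ → ℂ} {r R : ℝ}
    (hh : DifferentiableOn ℂ h (ball 0 R)) (hinj : InjOn (fun z => z⁻¹ + h z) (ball 0 R \ {0}))
    (hr : 0 < r) {C : Set ℂ} (hCconv : Convex ℝ C) (hCclosed : IsClosed C)
    (hC : ∀ z ∈ sphere 0 r, z⁻¹ + h z ∈ C) :
    (fun z => z⁻¹ + h z) '' (ball 0 R \ closedBall 0 r) ⊆ C := by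
  rintro _ ⟨ζ, ⟨hζR, hζr⟩, rfl⟩
  have hrζ : r < ‖ζ‖ := by simpa using hζr
  have hsub : closedBall (0 : ℂ) r ⊆ ball 0 R :=
    closedBall_subset_ball (hrζ.trans (by simpa using hζR))
  have hp : DifferentiableOn ℂ (fun z => 1 + z * h z) (ball 0 R) :=
    (differentiableOn_id.mul hh).const_add 1
  refine mem_of_convex_of_pole isOpen_ball isBounded_ball (mem_ball_self hr)
    (hp.mono ((closure_ball_subset_closedBall).trans hsub)).diffContOnCl hCconv hCclosed ?_ ?_
  · intro z hz
    rw [frontier_ball _ hr.ne'] at hz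
    have hz0 : z ≠ 0 := ne_of_mem_sphere hz hr.ne'
    convert hC z hz using 1
    field_simp
  · intro z hz heq
    rw [closure_ball _ hr.ne'] at hz
    have hz0 : z ≠ 0 := by
      rintro rfl
      simp at heq
    have hzζ : z = ζ := by
      refine hinj ⟨hsub hz, hz0⟩ ⟨hζR, norm_pos_iff.1 (hr.trans hrζ)⟩ ?_
      dsimp only
      rw [← mul_right_inj' hz0, ← heq]
      field_simp
    exact hζr (hzζ ▸ hz)

/-! ### The area theorem -/

theorem volume_image_eq_lintegral_enorm_deriv_sq {φ : ℂ → ℂ} {s : Set ℂ} (hs : MeasurableSet s)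
    (hφ : ∀ z ∈ s, DifferentiableAt ℂ φ z) (hinj : InjOn φ s) :
    volume (φ '' s) = ∫⁻ z in s, ‖deriv φ z‖ₑ ^ 2 := by
  have hderiv : ∀ z ∈ s, HasFDerivWithinAt φ ((fderiv ℂ φ z).restrictScalars ℝ) s z :=
    fun z hz => ((hφ z hz).hasFDerivAt.restrictScalars ℝ).hasFDerivWithinAt
  have hdet : ∀ z, ((fderiv ℂ φ z).restrictScalars ℝ).det = ‖deriv φ z‖ ^ 2 := fun z => by
    simp [ContinuousLinearMap.det, LinearMap.det_restrictScalars, Algebra.norm_complex_eq,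
      Complex.normSq_eq_norm_sq]
  rw [← lintegral_abs_det_fderiv_eq_addHaar_image volume hs hderiv hinj]
  simp_rw [hdet, abs_pow, abs_norm, ENNReal.ofReal_pow (norm_nonneg _), ofReal_norm]

theorem det_mulLeft_add_mulLeft_comp_conj (a b : ℂ) :
    LinearMap.det (LinearMap.mulLeft ℝ a + LinearMap.mulLeft ℝ b ∘ₗ Complex.conjAe.toLinearMap) =
      ‖a‖ ^ 2 - ‖b‖ ^ 2 := by
  have hmatrix : LinearMap.toMatrix Complex.basisOneI Complex.basisOneI
      (LinearMap.mulLeft ℝ a + LinearMap.mulLeft ℝ b ∘ₗ Complex.conjAe.toLinearMap) =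
      !![a.re + b.re, b.im - a.im; a.im + b.im, a.re - b.re] := by
    ext i j
    fin_cases i <;> fin_cases j <;> simp [LinearMap.toMatrix_apply, sub_eq_add_neg, add_comm]
  rw [← LinearMap.det_toMatrix Complex.basisOneI, hmatrix, Matrix.det_fin_two_of,
    Complex.sq_norm, Complex.sq_norm, Complex.normSq_apply, Complex.normSq_apply]
  ring

theorem volume_setOf_norm_mul_add_mul_conj_le {a b : ℂ} (hab : ‖a‖ ≠ ‖b‖) {ρ : ℝ} (hρ : 0 ≤ ρ) :
    volume {v : ℂ | ‖a * v + b * conj v‖ ≤ ρ} =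
      ENNReal.ofReal (π * ρ ^ 2 / |‖a‖ ^ 2 - ‖b‖ ^ 2|) := by
  let T : ℂ →ₗ[ℝ] ℂ :=
    LinearMap.mulLeft ℝ a + LinearMap.mulLeft ℝ b ∘ₗ Complex.conjAe.toLinearMap
  have hdet : LinearMap.det T = ‖a‖ ^ 2 - ‖b‖ ^ 2 := det_mulLeft_add_mulLeft_comp_conj a b
  have hdet0 : LinearMap.det T ≠ 0 := by
    rw [hdet, sub_ne_zero]
    exact fun h => hab ((pow_left_inj₀ (norm_nonneg _) (norm_nonneg _) two_ne_zero).1 h)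
  have hpre : {v : ℂ | ‖a * v + b * conj v‖ ≤ ρ} = T ⁻¹' closedBall 0 ρ := by
    ext v
    simp [T]
  rw [hpre, Measure.addHaar_preimage_linearMap volume hdet0, hdet, Complex.volume_closedBall,
    ← ENNReal.ofReal_coe_nnreal, ← ENNReal.ofReal_pow hρ, ← ENNReal.ofReal_mul (by positivity),
    ← ENNReal.ofReal_mul (by positivity), abs_inv, NNReal.coe_real_pi]
  ring_nf

theorem lintegral_annulus_eq {u : ℂ → ℝ≥0∞} (hu : Measurable u) {r R : ℝ} (hr : 0 ≤ r) :
    ∫⁻ z in ball 0 R \ closedBall 0 r, u z =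
      ∫⁻ ρ in Ioo r R, ENNReal.ofReal ρ * ∫⁻ θ in Ioo (-π) π, u (circleMap 0 ρ θ) := by
  have hmap : ∀ p : ℝ × ℝ, Complex.polarCoord.symm p = circleMap 0 p.1 p.2 := fun p => by
    rw [Complex.polarCoord_symm_apply, circleMap, Complex.exp_mul_I]
    simp
  have hmeas : Measurable fun p : ℝ × ℝ => ENNReal.ofReal p.1 * u (circleMap 0 p.1 p.2) :=
    (measurable_fst.ennreal_ofReal).mul (hu.comp (by unfold circleMap; fun_prop))
  have hann : MeasurableSet (ball (0 : ℂ) R \ closedBall 0 r) :=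
    measurableSet_ball.diff measurableSet_closedBall
  calc ∫⁻ z in ball 0 R \ closedBall 0 r, u z
      = ∫⁻ p in Ioi 0 ×ˢ Ioo (-π) π,
          ENNReal.ofReal p.1 • (ball 0 R \ closedBall 0 r).indicator u (circleMap 0 p.1 p.2) := by
        rw [← lintegral_indicator hann, ← Complex.lintegral_comp_polarCoord_symm,
          polarCoord_target]
        simp only [hmap]
    _ = ∫⁻ p in Ioi 0 ×ˢ Ioo (-π) π, (Ioo r R ×ˢ univ).indicator
          (fun p : ℝ × ℝ => ENNReal.ofReal p.1 * u (circleMap 0 p.1 p.2)) p := by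
        refine setLIntegral_congr_fun (measurableSet_Ioi.prod measurableSet_Ioo) fun p hp => ?_
        have hp0 : 0 < p.1 := hp.1
        simp [indicator, abs_of_pos hp0, and_comm]
    _ = ∫⁻ p in Ioo r R ×ˢ Ioo (-π) π, ENNReal.ofReal p.1 * u (circleMap 0 p.1 p.2) := by
        have hIoo : Ioo r R ∩ Ioi 0 = Ioo r R := inter_eq_left.2 fun ρ hρ => hr.trans_lt hρ.1
        rw [setLIntegral_indicator (measurableSet_Ioo.prod .univ), prod_inter_prod, univ_inter,
          hIoo]
    _ = ∫⁻ ρ in Ioo r R, ENNReal.ofReal ρ * ∫⁻ θ in Ioo (-π) π, u (circleMap 0 ρ θ) := by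
        rw [Measure.volume_eq_prod, setLIntegral_prod _ hmeas.aemeasurable]
        exact lintegral_congr fun ρ => lintegral_const_mul (ENNReal.ofReal ρ)
          (f := fun θ => u (circleMap 0 ρ θ)) (hu.comp (continuous_circleMap 0 ρ).measurable)

theorem ofReal_two_pi_mul_circleAverage {u : ℂ → ℝ} {c : ℂ} {ρ : ℝ} (hu : CircleIntegrable u c ρ)
    (hu0 : 0 ≤ u) : ENNReal.ofReal (2 * π * Real.circleAverage u c ρ) =
      ∫⁻ θ in Ioo (-π) π, ENNReal.ofReal (u (circleMap c ρ θ)) := by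
  have hper : Function.Periodic (fun θ => u (circleMap c ρ θ)) (2 * π) :=
    (periodic_circleMap c ρ).comp u
  have hint : 2 * π * Real.circleAverage u c ρ = ∫ θ in Ioo (-π) π, u (circleMap c ρ θ) := by
    have hshift := hper.intervalIntegral_add_eq 0 (-π)
    rw [zero_add, show -π + 2 * π = π by ring,
      intervalIntegral.integral_of_le (by linarith [Real.pi_pos] : -π ≤ π),
      integral_Ioc_eq_integral_Ioo] at hshift
    rw [Real.circleAverage, ← hshift, smul_eq_mul, mul_inv_cancel_left₀ Real.two_pi_pos.ne']
  have hintg : IntegrableOn (fun θ => u (circleMap c ρ θ)) (Ioo (-π) π) := by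
    have := hper.intervalIntegrable₀ Real.two_pi_pos.ne' hu (-π) π
    rwa [intervalIntegrable_iff_integrableOn_Ioo_of_le (by linarith [Real.pi_pos])] at this
  rw [hint, ofReal_integral_eq_lintegral_ofReal hintg (.of_forall fun θ => hu0 _)]

theorem norm_sq_add_norm_sq_add_two_mul_re_le (v w b : ℂ) :
    ‖v‖ ^ 2 + ‖b‖ ^ 2 + 2 * (conj v * w + conj b * (w - b)).re ≤ ‖v + w‖ ^ 2 := by
  have hb : ‖b‖ ^ 2 + 2 * (conj b * (w - b)).re ≤ ‖w‖ ^ 2 := by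
    have h := norm_add_sq_real b (w - b)
    rw [add_sub_cancel, Complex.inner, mul_comm _ (conj b)] at h
    linarith [sq_nonneg ‖w - b‖]
  rw [norm_add_sq_real, Complex.inner, Complex.add_re, mul_comm (conj v)]
  linarith

theorem conj_div_pow {z : ℂ} (hz : z ≠ 0) (a : ℂ) (k : ℕ) :
    conj (a / z ^ k) = conj a / ‖z‖ ^ (2 * k) * z ^ k := by
  have hcz : conj z ≠ 0 := (map_ne_zero _).2 hz
  rw [map_div₀, map_pow, pow_mul, ← Complex.conj_mul', mul_pow]
  field_simp

theorem circleIntegrable_norm_div_pow_add_sq {n : ℂ → ℂ} {ρ : ℝ} (hρ : 0 < ρ)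
    (hn : ContinuousOn n (sphere 0 ρ)) (a : ℂ) (k : ℕ) :
    CircleIntegrable (fun z => ‖a / z ^ k + n z‖ ^ 2) 0 ρ :=
  ContinuousOn.circleIntegrable hρ.le (((continuousOn_const.div (continuousOn_id.pow k)
    fun _ hz => pow_ne_zero k (ne_of_mem_sphere hz hρ.ne')).add hn).norm.pow 2)

theorem norm_sq_div_add_norm_sq_le_circleAverage {n : ℂ → ℂ} {ρ : ℝ} (hρ : 0 < ρ)
    (hn : DiffContOnCl ℂ n (ball 0 ρ)) (a : ℂ) {k : ℕ} (hk : k ≠ 0) :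
    ‖a‖ ^ 2 / ρ ^ (2 * k) + ‖n 0‖ ^ 2 ≤
      Real.circleAverage (fun z => ‖a / z ^ k + n z‖ ^ 2) 0 ρ := by
  -- Since `conj z = ρ ^ 2 / z` on the circle, the lower bound that
  -- `norm_sq_add_norm_sq_add_two_mul_re_le` gives for the integrand is there the real part of the
  -- holomorphic function `H`.
  let H : ℂ → ℂ := fun z => (‖a‖ ^ 2 / ρ ^ (2 * k) + ‖n 0‖ ^ 2 : ℝ) +
    (2 : ℝ) * (conj a / ρ ^ (2 * k) * (z ^ k * n z) + conj (n 0) * (n z - n 0))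
  have hH : DiffContOnCl ℂ H (ball 0 ρ) := by
    have hzn : DiffContOnCl ℂ (fun z => z ^ k * n z) (ball 0 ρ) :=
      (differentiable_id.pow k).diffContOnCl.smul hn
    exact (((hzn.const_smul (conj a / ρ ^ (2 * k) : ℂ)).add
      ((hn.sub_const (n 0)).const_smul (conj (n 0)))).const_smul ((2 : ℝ) : ℂ)).const_add _
  have hsphere : sphere (0 : ℂ) ρ ⊆ closure (ball 0 ρ) := by
    rw [closure_ball _ hρ.ne']
    exact sphere_subset_closedBall
  have hHcont : ContinuousOn H (sphere 0 ρ) := hH.continuousOn.mono hsphere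
  have hle : ∀ z ∈ sphere (0 : ℂ) |ρ|, (H z).re ≤ ‖a / z ^ k + n z‖ ^ 2 := by
    intro z hz
    rw [abs_of_pos hρ] at hz
    have hzρ : ‖z‖ = ρ := mem_sphere_zero_iff_norm.1 hz
    have hnorm : ‖a / z ^ k‖ ^ 2 = ‖a‖ ^ 2 / ρ ^ (2 * k) := by
      rw [norm_div, norm_pow, hzρ, div_pow, ← pow_mul, mul_comm k]
    have h := norm_sq_add_norm_sq_add_two_mul_re_le (a / z ^ k) (n z) (n 0)
    rw [conj_div_pow (ne_of_mem_sphere hz hρ.ne'), hnorm, hzρ, mul_assoc] at h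
    simpa only [H, Complex.add_re, Complex.ofReal_re, Complex.re_ofReal_mul] using h
  calc ‖a‖ ^ 2 / ρ ^ (2 * k) + ‖n 0‖ ^ 2 = (H 0).re := by
        simp [H, hk, ← Complex.ofReal_pow]
    _ = (Real.circleAverage H 0 ρ).re := by
        rw [DiffContOnCl.circleAverage (by rwa [abs_of_pos hρ])]
    _ = Real.circleAverage (fun z => (H z).re) 0 ρ :=
      (Complex.reCLM.circleAverage_comp_comm (hHcont.circleIntegrable hρ.le)).symm
    _ ≤ Real.circleAverage (fun z => ‖a / z ^ k + n z‖ ^ 2) 0 ρ :=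
      Real.circleAverage_mono
        ((Complex.continuous_re.comp_continuousOn hHcont).circleIntegrable hρ.le)
        (circleIntegrable_norm_div_pow_add_sq hρ (hn.continuousOn.mono hsphere) a k) hle

theorem lintegral_Ioo_inv_pow_add {r R : ℝ} (hr : 0 < r) (hrR : r ≤ R) {B : ℝ} (hB : 0 ≤ B) :
    ∫⁻ ρ in Ioo r R, ENNReal.ofReal (ρ * (2 * π * (1 / ρ ^ 4 + B))) =
      ENNReal.ofReal (π * (1 / r ^ 2 - 1 / R ^ 2 + B * (R ^ 2 - r ^ 2))) := by
  have hne : ∀ ρ ∈ uIcc r R, ρ ≠ 0 := fun ρ hρ => by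
    rw [uIcc_of_le hrR] at hρ
    exact (hr.trans_le hρ.1).ne'
  have hcont : ContinuousOn (fun ρ : ℝ => ρ * (2 * π * (1 / ρ ^ 4 + B))) (uIcc r R) :=
    continuousOn_id.mul (((continuousOn_const.div (continuousOn_id.pow 4)
      fun ρ hρ => pow_ne_zero 4 (hne ρ hρ)).add continuousOn_const).const_mul _)
  have hderiv : ∀ ρ ∈ uIcc r R, HasDerivAt (fun ρ : ℝ => π * (B * ρ ^ 2 - (ρ ^ 2)⁻¹))
      (ρ * (2 * π * (1 / ρ ^ 4 + B))) ρ := fun ρ hρ => by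
    have hρ0 := hne ρ hρ
    refine (((hasDerivAt_pow 2 ρ).const_mul B).sub
      ((hasDerivAt_pow 2 ρ).inv (pow_ne_zero 2 hρ0))).const_mul π |>.congr_deriv ?_
    field_simp
    push_cast
    ring
  have hint := hcont.intervalIntegrable (μ := volume)
  have hftc := intervalIntegral.integral_eq_sub_of_hasDerivAt hderiv hint
  rw [intervalIntegral.integral_of_le hrR, integral_Ioc_eq_integral_Ioo] at hftc
  rw [intervalIntegrable_iff_integrableOn_Ioo_of_le hrR] at hint
  have hnonneg : ∀ᵐ ρ ∂volume.restrict (Ioo r R), 0 ≤ ρ * (2 * π * (1 / ρ ^ 4 + B)) :=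
    (ae_restrict_mem measurableSet_Ioo).mono fun ρ hρ => by
      have := hr.trans hρ.1
      positivity
  rw [← ofReal_integral_eq_lintegral_ofReal hint hnonneg, hftc]
  ring_nf

theorem deriv_inv_add {h : ℂ → ℂ} {z : ℂ} (hz : z ≠ 0) (hh : DifferentiableAt ℂ h z) :
    deriv (fun z => z⁻¹ + h z) z = -1 / z ^ 2 + deriv h z := by
  rw [deriv_fun_add (differentiableAt_inv hz) hh, deriv_inv, neg_div, one_div]

theorem le_volume_image_annulus {h : ℂ → ℂ} {r R : ℝ} (hh : DifferentiableOn ℂ h (ball 0 R))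
    (hinj : InjOn (fun z => z⁻¹ + h z) (ball 0 R \ {0})) (hr : 0 < r) (hrR : r ≤ R) :
    ENNReal.ofReal (π * (1 / r ^ 2 - 1 / R ^ 2 + ‖deriv h 0‖ ^ 2 * (R ^ 2 - r ^ 2))) ≤
      volume ((fun z => z⁻¹ + h z) '' (ball 0 R \ closedBall 0 r)) := by
  have hsub : ball (0 : ℂ) R \ closedBall 0 r ⊆ ball 0 R \ {0} :=
    sdiff_subset_sdiff_right (singleton_subset_iff.2 (mem_closedBall_self hr.le))
  have hdiff : ∀ z ∈ ball (0 : ℂ) R, DifferentiableAt ℂ h z := fun z hz =>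
    hh.differentiableAt (isOpen_ball.mem_nhds hz)
  rw [volume_image_eq_lintegral_enorm_deriv_sq
      (measurableSet_ball.diff measurableSet_closedBall)
      (fun z hz => (differentiableAt_inv (hsub hz).2).fun_add (hdiff z hz.1)) (hinj.mono hsub),
    lintegral_annulus_eq ((measurable_deriv _).enorm.pow_const 2) hr.le,
    ← lintegral_Ioo_inv_pow_add hr hrR (sq_nonneg _)]
  refine setLIntegral_mono' measurableSet_Ioo fun ρ hρ => ?_
  have hρ0 : 0 < ρ := hr.trans hρ.1
  set u : ℂ → ℝ := fun z => ‖-1 / z ^ 2 + deriv h z‖ ^ 2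
  have hn : DiffContOnCl ℂ (deriv h) (ball 0 ρ) :=
    ((hh.deriv isOpen_ball).mono
      (closure_ball_subset_closedBall.trans (closedBall_subset_ball hρ.2))).diffContOnCl
  have hu : CircleIntegrable u 0 ρ := circleIntegrable_norm_div_pow_add_sq hρ0
    ((hh.deriv isOpen_ball).continuousOn.mono
      (sphere_subset_closedBall.trans (closedBall_subset_ball hρ.2))) (-1) 2
  have hφ : ∀ θ, ‖deriv (fun z => z⁻¹ + h z) (circleMap 0 ρ θ)‖ₑ ^ 2 =
      ENNReal.ofReal (u (circleMap 0 ρ θ)) := fun θ => by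
    rw [deriv_inv_add (circleMap_ne_center hρ0.ne')
      (hdiff _ (closedBall_subset_ball hρ.2 (circleMap_mem_closedBall 0 hρ0.le θ))),
      ENNReal.ofReal_pow (norm_nonneg _), ofReal_norm]
  simp_rw [hφ]
  rw [← ofReal_two_pi_mul_circleAverage hu fun z => sq_nonneg _, ← ENNReal.ofReal_mul hρ0.le]
  have hmean : 1 / ρ ^ 4 + ‖deriv h 0‖ ^ 2 ≤ Real.circleAverage u 0 ρ := by
    simpa using norm_sq_div_add_norm_sq_le_circleAverage hρ0 hn (-1) two_ne_zero
  gcongr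

/-- The image of an annulus lies in an ellipse of area `π * ρ ^ 2 / (1 - ‖b‖ ^ 2)`, because the
image of its inner circle does. -/
theorem one_sub_norm_sq_mul_le_of_image_sphere {h : ℂ → ℂ} {r R : ℝ}
    (hh : DifferentiableOn ℂ h (ball 0 R)) (hinj : InjOn (fun z => z⁻¹ + h z) (ball 0 R \ {0}))
    (hr : 0 < r) (hrR : r ≤ R) {b : ℂ} (hb : ‖b‖ < 1) {ρ : ℝ} (hρ : 0 ≤ ρ)
    (hbound : ∀ z ∈ sphere 0 r, ‖z⁻¹ + h z - b * conj (z⁻¹ + h z)‖ ≤ ρ) :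
    (1 - ‖b‖ ^ 2) * (1 / r ^ 2 - 1 / R ^ 2 + ‖deriv h 0‖ ^ 2 * (R ^ 2 - r ^ 2)) ≤ ρ ^ 2 := by
  set C : Set ℂ := {v | ‖1 * v + -b * conj v‖ ≤ ρ} with hC
  let T : ℂ →ₗ[ℝ] ℂ :=
    LinearMap.mulLeft ℝ 1 + LinearMap.mulLeft ℝ (-b) ∘ₗ Complex.conjAe.toLinearMap
  have hCpre : C = T ⁻¹' closedBall 0 ρ := by
    ext v
    simp [C, T]
  have hsubset : (fun z => z⁻¹ + h z) '' (ball 0 R \ closedBall 0 r) ⊆ C := by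
    refine image_annulus_subset_of_convex hh hinj hr ?_ ?_ fun z hz => ?_
    · rw [hCpre]
      exact (convex_closedBall 0 ρ).linear_preimage T
    · exact isClosed_le (by fun_prop) continuous_const
    · simpa [C, sub_eq_add_neg] using hbound z hz
  have hb2 : ‖b‖ ^ 2 < 1 := (sq_lt_one_iff₀ (norm_nonneg b)).2 hb
  have hvol : volume C = ENNReal.ofReal (π * ρ ^ 2 / (1 - ‖b‖ ^ 2)) := by
    rw [hC, volume_setOf_norm_mul_add_mul_conj_le (by simpa using hb.ne') hρ]
    simp [abs_of_pos (sub_pos.2 hb2)]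
  have hle := (le_volume_image_annulus hh hinj hr hrR).trans (measure_mono hsubset)
  rw [hvol, ENNReal.ofReal_le_ofReal_iff (by have := sub_pos.2 hb2; positivity), mul_div_assoc,
    mul_le_mul_iff_right₀ Real.pi_pos, le_div_iff₀ (sub_pos.2 hb2), mul_comm] at hle
  exact hle

theorem eventually_norm_inv_add_sub_mul_conj_le {h : ℂ → ℂ} (hh : DifferentiableAt ℂ h 0)
    (h0 : h 0 = 0) {ε : ℝ} (hε : 0 < ε) :
    ∀ᶠ z in 𝓝[≠] 0, ‖z⁻¹ + h z - deriv h 0 * ‖z‖ ^ 2 * conj (z⁻¹ + h z)‖ ≤ 1 / ‖z‖ + ε * ‖z‖ := by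
  set m := dslope h 0
  have hm : ContinuousAt m 0 := continuousAt_dslope_same.2 hh
  have hsmall : ∀ᶠ z in 𝓝 0, ‖m z - m 0‖ + ‖m 0‖ * ‖z‖ ^ 2 * ‖m z‖ < ε :=
    ContinuousAt.eventually_lt (by fun_prop) continuousAt_const (by simpa)
  filter_upwards [hsmall.filter_mono nhdsWithin_le_nhds, self_mem_nhdsWithin] with z hz hz0
  have hhz : h z = z * m z := by simpa [h0] using (sub_smul_dslope h 0 z).symm
  have hconj : (‖z‖ : ℂ) ^ 2 * conj z⁻¹ = z := by
    have hcz : conj z ≠ 0 := (map_ne_zero _).2 hz0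
    rw [← Complex.conj_mul', map_inv₀]
    field_simp
  calc ‖z⁻¹ + h z - deriv h 0 * ‖z‖ ^ 2 * conj (z⁻¹ + h z)‖
      = ‖z⁻¹ + (z * (m z - m 0) - m 0 * ‖z‖ ^ 2 * conj (z * m z))‖ := by
        rw [← dslope_same, hhz, map_add]
        congr 1
        linear_combination (-m 0) * hconj
    _ ≤ ‖z⁻¹‖ + (‖z * (m z - m 0)‖ + ‖m 0 * ‖z‖ ^ 2 * conj (z * m z)‖) :=
        (norm_add_le _ _).trans (by gcongr; exact norm_sub_le _ _)
    _ = 1 / ‖z‖ + (‖m z - m 0‖ + ‖m 0‖ * ‖z‖ ^ 2 * ‖m z‖) * ‖z‖ := by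
        simp only [norm_inv, norm_mul, norm_pow, Complex.norm_real, norm_norm, RCLike.norm_conj]
        ring
    _ ≤ 1 / ‖z‖ + ε * ‖z‖ := by gcongr

theorem eventually_norm_deriv_zero_sq_mul_sub_one_le {h : ℂ → ℂ}
    (hh : DifferentiableOn ℂ h (ball 0 1)) (hinj : InjOn (fun z => z⁻¹ + h z) (ball 0 1 \ {0}))
    (h0 : h 0 = 0) {ε : ℝ} (hε : 0 < ε) :
    ∀ᶠ r in 𝓝[>] (0 : ℝ),
      ‖deriv h 0‖ ^ 2 * (1 - 2 * r ^ 2 + r ^ 4 - ‖deriv h 0‖ ^ 2 * (r ^ 4 - r ^ 6)) - 1 ≤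
        2 * ε + ε ^ 2 * r ^ 2 := by
  set β := ‖deriv h 0‖
  obtain ⟨δ, hδ, hball⟩ := Metric.mem_nhdsWithin_iff.1 <|
    eventually_norm_inv_add_sub_mul_conj_le (hh.differentiableAt (ball_mem_nhds 0 one_pos)) h0 hε
  have hβr : ∀ᶠ r in 𝓝[>] (0 : ℝ), β * r ^ 2 < 1 :=
    (ContinuousAt.eventually_lt (by fun_prop) continuousAt_const (by simp)).filter_mono
      nhdsWithin_le_nhds
  filter_upwards [hβr, Ioo_mem_nhdsGT one_pos, Ioo_mem_nhdsGT hδ] with r hβr hr1 hrδ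
  have hr : 0 < r := hr1.1
  have hnorm : ‖deriv h 0 * (r : ℂ) ^ 2‖ = β * r ^ 2 := by simp [β]
  have hvol := one_sub_norm_sq_mul_le_of_image_sphere (b := deriv h 0 * (r : ℂ) ^ 2)
    (ρ := 1 / r + ε * r) hh hinj hr hr1.2.le (hnorm ▸ hβr) (by positivity) fun z hz => by
      have hzr : ‖z‖ = r := mem_sphere_zero_iff_norm.1 hz
      simpa [hzr] using hball ⟨by simpa [hzr] using hrδ.2, ne_of_mem_sphere hz hr.ne'⟩
  have hleft : (1 - (β * r ^ 2) ^ 2) * (1 / r ^ 2 - 1 / 1 ^ 2 + β ^ 2 * (1 ^ 2 - r ^ 2)) =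
      1 / r ^ 2 + (β ^ 2 * (1 - 2 * r ^ 2 + r ^ 4 - β ^ 2 * (r ^ 4 - r ^ 6)) - 1) := by
    field_simp
    ring
  have hright : (1 / r + ε * r) ^ 2 = 1 / r ^ 2 + (2 * ε + ε ^ 2 * r ^ 2) := by
    field_simp
    ring
  rw [hnorm, hleft, hright] at hvol
  exact (add_le_add_iff_left _).1 hvol

theorem norm_deriv_zero_le_one_of_injOn_inv_add {h : ℂ → ℂ} (hh : DifferentiableOn ℂ h (ball 0 1))
    (hinj : InjOn (fun z => z⁻¹ + h z) (ball 0 1 \ {0})) : ‖deriv h 0‖ ≤ 1 := by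
  wlog h0 : h 0 = 0 generalizing h
  · have := this (hh.sub_const (h 0)) (fun z hz w hw hzw => hinj hz hw ?_) (sub_self _)
    · rwa [deriv_sub_const] at this
    · simpa [← add_sub_assoc] using hzw
  refine (sq_le_one_iff₀ (norm_nonneg _)).1 (sub_nonpos.1 ?_)
  refine le_of_forall_pos_le_add fun ε hε => ?_
  have hlim := le_of_tendsto_of_tendsto (b := 𝓝[>] (0 : ℝ))
    ((Continuous.tendsto (by fun_prop) 0).mono_left nhdsWithin_le_nhds)
    ((Continuous.tendsto (by fun_prop) 0).mono_left nhdsWithin_le_nhds)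
    (eventually_norm_deriv_zero_sq_mul_sub_one_le hh hinj h0 (half_pos hε))
  simpa [mul_div_cancel₀] using hlim

/-! ### Bieberbach's inequality and the Koebe quarter theorem -/

theorem exists_hasDerivAt_logDeriv_and_exp_eqOn {G : ℂ → ℂ} {c : ℂ} {R : ℝ}
    (hG : DifferentiableOn ℂ G (ball c R)) (hG0 : ∀ z ∈ ball c R, G z ≠ 0) :
    ∃ l : ℂ → ℂ, (∀ z ∈ ball c R, HasDerivAt l (logDeriv G z) z) ∧
      EqOn (fun z => Complex.exp (l z)) G (ball c R) := by
  obtain ⟨l, hl⟩ := ((hG.deriv isOpen_ball).div hG hG0).isExactOn_ball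
  have hexp : ∀ z ∈ ball c R, HasDerivAt (fun z => Complex.exp (l z))
      (Complex.exp (l z) * logDeriv G z) z := fun z hz => (hl z hz).cexp
  have hlogDeriv : EqOn (logDeriv fun z => Complex.exp (l z)) (logDeriv G) (ball c R) :=
    fun z hz => by
      rw [logDeriv_apply, (hexp z hz).deriv, mul_div_cancel_left₀ _ (Complex.exp_ne_zero _)]
  obtain ⟨a, ha, hla⟩ := (logDeriv_eqOn_iff
    (fun z hz => (hexp z hz).differentiableAt.differentiableWithinAt) hG isOpen_ball
    (convex_ball c R).isPreconnected hG0 fun _ _ => Complex.exp_ne_zero _).1 hlogDeriv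
  refine ⟨fun z => l z - Complex.log a, fun z hz => (hl z hz).sub_const _, fun z hz => ?_⟩
  have hz : Complex.exp (l z) = a * G z := hla hz
  dsimp only
  rw [Complex.exp_sub, Complex.exp_log ha, hz, mul_div_cancel_left₀ _ ha]

theorem exists_sq_mul_eq_apply_zero {G : ℂ → ℂ} {R : ℝ} (hR : 0 < R)
    (hG : DifferentiableOn ℂ G (ball 0 R)) (hG0 : ∀ z ∈ ball 0 R, G z ≠ 0) :
    ∃ E : ℂ → ℂ, DifferentiableOn ℂ E (ball 0 R) ∧ (∀ z ∈ ball 0 R, E z ^ 2 * G z = G 0) ∧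
      E 0 = 1 ∧ deriv E 0 = -logDeriv G 0 / 2 := by
  have h0 : (0 : ℂ) ∈ ball (0 : ℂ) R := mem_ball_self hR
  obtain ⟨l, hl, hlG⟩ := exists_hasDerivAt_logDeriv_and_exp_eqOn hG hG0
  let E : ℂ → ℂ := fun z => Complex.exp ((l 0 - l z) / 2)
  have hE : ∀ z ∈ ball 0 R, HasDerivAt E (E z * (-logDeriv G z / 2)) z := fun z hz =>
    (((hl z hz).const_sub (l 0)).div_const 2).cexp
  have hE0 : E 0 = 1 := by simp [E]
  refine ⟨E, fun z hz => (hE z hz).differentiableAt.differentiableWithinAt, fun z hz => ?_, hE0,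
    by rw [(hE 0 h0).deriv, hE0, one_mul]⟩
  rw [← hlG hz, ← hlG h0, ← Complex.exp_nat_mul, ← Complex.exp_add]
  congr 1
  push_cast
  ring

theorem mapsTo_sq_ball_zero_one : MapsTo (fun z : ℂ => z ^ 2) (ball 0 1) (ball 0 1) :=
  fun z hz => by simpa [sq_lt_one_iff₀] using hz

theorem injOn_div_of_sq_mul_eq {E G : ℂ → ℂ} {a : ℂ} (ha : a ≠ 0)
    (hEG : ∀ z ∈ ball (0 : ℂ) 1, E z ^ 2 * G z = a) (hinj : InjOn (fun z => z * G z) (ball 0 1)) :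
    InjOn (fun z => E (z ^ 2) / z) (ball 0 1 \ {0}) := by
  rintro z ⟨hz, hz0⟩ w ⟨hw, hw0⟩ hzw
  have hz2 := mapsTo_sq_ball_zero_one hz
  have hw2 := mapsTo_sq_ball_zero_one hw
  dsimp only at hzw
  rw [div_eq_div_iff hz0 hw0] at hzw
  have hzG : z ^ 2 * G (z ^ 2) = w ^ 2 * G (w ^ 2) := by
    refine mul_left_cancel₀ ha ?_
    linear_combination -(z ^ 2 * G (z ^ 2)) * hEG _ hw2 + w ^ 2 * G (w ^ 2) * hEG _ hz2 -
      G (z ^ 2) * G (w ^ 2) * (E (z ^ 2) * w + E (w ^ 2) * z) * hzw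
  have hE0 : E (w ^ 2) ≠ 0 := fun h => ha (by rw [← hEG _ hw2, h]; ring)
  have hzw2 : z ^ 2 = w ^ 2 := hinj hz2 hw2 hzG
  rw [hzw2] at hzw
  exact (mul_left_cancel₀ hE0 hzw).symm

/-- Bieberbach's inequality: if `z * G z = a₁ z + a₂ z ^ 2 + …`, then `logDeriv G 0 = a₂ / a₁`. The
area theorem is applied to the square root `E (z ^ 2) / z` of `a₁ / (z ^ 2 * G (z ^ 2))`. -/
theorem norm_logDeriv_zero_le_two_of_injOn {G : ℂ → ℂ} (hG : DifferentiableOn ℂ G (ball 0 1))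
    (hG0 : G 0 ≠ 0) (hinj : InjOn (fun z => z * G z) (ball 0 1)) : ‖logDeriv G 0‖ ≤ 2 := by
  have h0 : (0 : ℂ) ∈ ball (0 : ℂ) 1 := mem_ball_self one_pos
  have hne : ∀ z ∈ ball (0 : ℂ) 1, G z ≠ 0 := by
    intro z hz hGz
    obtain rfl : z = 0 := hinj hz h0 (by simp [hGz])
    exact hG0 hGz
  obtain ⟨E, hE, hEG, hE0, hE'⟩ := exists_sq_mul_eq_apply_zero one_pos hG hne
  have hM : DifferentiableOn ℂ (fun z => dslope E 0 (z ^ 2)) (ball 0 1) :=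
    ((Complex.differentiableOn_dslope (isOpen_ball.mem_nhds h0)).2 hE).comp
      (differentiableOn_id.pow 2) mapsTo_sq_ball_zero_one
  have hpole : EqOn (fun z => E (z ^ 2) / z) (fun z => z⁻¹ + z * dslope E 0 (z ^ 2))
      (ball 0 1 \ {0}) := fun z hz => by
    have hz0 : z ≠ 0 := hz.2
    have hslope : z ^ 2 * dslope E 0 (z ^ 2) = E (z ^ 2) - 1 := by
      simpa [hE0] using sub_smul_dslope E 0 (z ^ 2)
    field_simp
    linear_combination -hslope
  have hderiv : deriv (fun z => z * dslope E 0 (z ^ 2)) 0 = -logDeriv G 0 / 2 := by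
    have := (hasDerivAt_id (0 : ℂ)).fun_mul (hM.hasDerivAt (isOpen_ball.mem_nhds h0))
    simpa [hE'] using this.deriv
  have harea := norm_deriv_zero_le_one_of_injOn_inv_add (differentiableOn_id.fun_mul hM)
    ((injOn_div_of_sq_mul_eq hG0 hEG hinj).congr hpole)
  rw [hderiv, norm_div, norm_neg, Complex.norm_ofNat] at harea
  linarith

theorem norm_apply_zero_le_four_mul_of_notMem_image {G : ℂ → ℂ}
    (hG : DifferentiableOn ℂ G (ball 0 1)) (hG0 : G 0 ≠ 0)
    (hinj : InjOn (fun z => z * G z) (ball 0 1)) {w : ℂ}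
    (hw : w ∉ (fun z => z * G z) '' ball 0 1) : ‖G 0‖ ≤ 4 * ‖w‖ := by
  have h0 : (0 : ℂ) ∈ ball (0 : ℂ) 1 := mem_ball_self one_pos
  have hw0 : w ≠ 0 := by
    rintro rfl
    exact hw ⟨0, h0, zero_mul _⟩
  have hD : DifferentiableOn ℂ (fun z => 1 - z * G z / w) (ball 0 1) :=
    ((differentiableOn_id.fun_mul hG).div_const w).const_sub 1
  have hDne : ∀ z ∈ ball (0 : ℂ) 1, 1 - z * G z / w ≠ 0 := fun z hz hz1 =>
    hw ⟨z, hz, by field_simp at hz1; linear_combination -hz1⟩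
  have hK : InjOn (fun z => z * (G z / (1 - z * G z / w))) (ball 0 1) := by
    intro x hx y hy hxy
    dsimp only at hxy
    rw [← mul_div_assoc, ← mul_div_assoc, div_eq_div_iff (hDne x hx) (hDne y hy)] at hxy
    exact hinj hx hy (by linear_combination hxy)
  have hlogDeriv : logDeriv (fun z => G z / (1 - z * G z / w)) 0 = logDeriv G 0 + G 0 / w := by
    have hG' := hG.differentiableAt (isOpen_ball.mem_nhds h0)
    have hD' : HasDerivAt (fun z => 1 - z * G z / w) (-(G 0 / w)) 0 := by
      simpa using (((hasDerivAt_id (0 : ℂ)).fun_mul hG'.hasDerivAt).div_const w).const_sub 1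
    rw [logDeriv_div 0 hG0 (hDne 0 h0) hG' hD'.differentiableAt,
      logDeriv_apply (fun z => 1 - z * G z / w), hD'.deriv]
    simp
  have hG2 := norm_logDeriv_zero_le_two_of_injOn hG hG0 hinj
  have hK2 := norm_logDeriv_zero_le_two_of_injOn (hG.fun_div hD hDne) (by simpa using hG0) hK
  have hle : ‖G 0 / w‖ ≤ 4 := by
    calc ‖G 0 / w‖ = ‖logDeriv G 0 + G 0 / w - logDeriv G 0‖ := by rw [add_sub_cancel_left]
      _ ≤ ‖logDeriv G 0 + G 0 / w‖ + ‖logDeriv G 0‖ := norm_sub_le _ _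
      _ ≤ 4 := by
        rw [hlogDeriv] at hK2
        linarith
  rwa [norm_div, div_le_iff₀ (norm_pos_iff.2 hw0)] at hle

theorem ball_subset_image_ball_of_injOn {g : ℂ → ℂ} {c : ℂ} {R : ℝ}
    (hg : DifferentiableOn ℂ g (ball c R)) (hinj : InjOn g (ball c R)) :
    ball (g c) (R * ‖deriv g c‖ / 4) ⊆ g '' ball c R := by
  intro w hw
  by_contra hwimg
  have hpos : 0 < R * ‖deriv g c‖ := by linarith [dist_nonneg.trans_lt (mem_ball.1 hw)]
  have hR : 0 < R := pos_of_mul_pos_left hpos (norm_nonneg _)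
  have hderiv : deriv g c ≠ 0 := norm_pos_iff.1 (pos_of_mul_pos_right hpos hR.le)
  have hscale : MapsTo (fun z : ℂ => c + R * z) (ball 0 1) (ball c R) := fun z hz => by
    simpa [abs_of_pos hR, hR] using hz
  let G : ℂ → ℂ := fun z => R * dslope g c (c + R * z)
  have hG : DifferentiableOn ℂ G (ball 0 1) :=
    (((Complex.differentiableOn_dslope (ball_mem_nhds c hR)).2 hg).comp (by fun_prop)
      hscale).const_mul _
  have hzG : ∀ z, z * G z = g (c + R * z) - g c := fun z => by
    have := sub_smul_dslope g c (c + R * z)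
    rw [add_sub_cancel_left, smul_eq_mul] at this
    rw [← this]
    ring
  have hG0 : G 0 = R * deriv g c := by simp [G]
  have hR' : (R : ℂ) ≠ 0 := by exact_mod_cast hR.ne'
  have hGinj : InjOn (fun z => z * G z) (ball 0 1) := fun x hx y hy hxy => by
    simp only [hzG, sub_left_inj] at hxy
    simpa [hR'] using hinj (hscale hx) (hscale hy) hxy
  have hle := norm_apply_zero_le_four_mul_of_notMem_image (w := w - g c) hG
    (hG0 ▸ mul_ne_zero hR' hderiv) hGinj fun ⟨z, hz, hzw⟩ =>
      hwimg ⟨_, hscale hz, sub_left_inj.1 ((hzG z).symm.trans hzw)⟩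
  rw [hG0, norm_mul, Complex.norm_of_nonneg hR.le, ← dist_eq_norm] at hle
  linarith [mem_ball.1 hw]

theorem isOpenEmbedding_domRestrict_of_injOn {g : ℂ → ℂ} {U : Set ℂ} (hU : IsOpen U)
    (hg : DifferentiableOn ℂ g U) (hinj : InjOn g U) : IsOpenEmbedding (U.domRestrict g) := by
  refine .of_continuous_injective_isOpenMap hg.continuousOn.domRestrict hinj.injective
    (.of_nhds_le fun ⟨z, hz⟩ => ?_)
  rw [domRestrict_eq, ← Filter.map_map, map_nhds_subtype_coe_eq_nhds hz (hU.mem_nhds hz)]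
  refine (hg.analyticAt (hU.mem_nhds hz)).eventually_constant_or_nhds_le_map_nhds.resolve_left ?_
  intro hconst
  have hlocal : ∀ᶠ w in 𝓝[≠] z, g w = g z ∧ w ∈ U :=
    nhdsWithin_le_nhds (hconst.and (hU.mem_nhds hz))
  obtain ⟨w, ⟨hgw, hwU⟩, hwz⟩ := (hlocal.and self_mem_nhdsWithin).exists
  exact hwz (hinj hwU hz hgw)

theorem dslope_ne_zero_of_injOn {𝕜 E : Type*} [NontriviallyNormedField 𝕜] [NormedAddCommGroup E]
    [NormedSpace 𝕜 E] {g : 𝕜 → E} {s : Set 𝕜} {c z : 𝕜} (hinj : InjOn g s) (hderiv : deriv g c ≠ 0)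
    (hc : c ∈ s) (hz : z ∈ s) : dslope g c z ≠ 0 := by
  rcases eq_or_ne z c with rfl | hzc
  · rwa [dslope_same]
  · rw [dslope_of_ne _ hzc, Ne, slope_eq_zero_iff]
    exact fun h => hzc (hinj hc hz h).symm

theorem lt_mul_norm_deriv_of_closedBall_subset_image {g : ℂ → ℂ} {c : ℂ} {R ρ : ℝ}
    (hg : DifferentiableOn ℂ g (ball c R)) (hinj : InjOn g (ball c R)) (hderiv : deriv g c ≠ 0)
    (hρ : 0 < ρ) (hsub : closedBall (g c) ρ ⊆ g '' ball c R) : ρ < R * ‖deriv g c‖ := by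
  have hR : 0 < R := by
    obtain ⟨z, hz, -⟩ := hsub (mem_closedBall_self hρ.le)
    exact dist_nonneg.trans_lt hz
  have hcompact : IsCompact (Subtype.val '' ((ball c R).domRestrict g ⁻¹' closedBall (g c) ρ)) :=
    (((isOpenEmbedding_domRestrict_of_injOn isOpen_ball hg hinj).isInducing.isCompact_preimage_iff
      (by rwa [range_domRestrict])).2 (isCompact_closedBall _ _)).image continuous_subtype_val
  obtain ⟨r, hrR, hr⟩ := exists_lt_subset_ball hcompact.isClosed (Subtype.coe_image_subset _ _)
  have hr0 : 0 < r := dist_nonneg.trans_lt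
    (hr ⟨⟨c, mem_ball_self hR⟩, mem_closedBall_self hρ.le, rfl⟩)
  have hclosed : closedBall c r ⊆ ball c R := closedBall_subset_ball hrR
  have hslope : DifferentiableOn ℂ (fun z => (dslope g c z)⁻¹) (ball c R) :=
    ((Complex.differentiableOn_dslope (ball_mem_nhds c hR)).2 hg)|>.fun_inv fun _ hz =>
      dslope_ne_zero_of_injOn hinj hderiv (mem_ball_self hR) hz
  have hsphere : ∀ z ∈ sphere c r, ‖(dslope g c z)⁻¹‖ ≤ r / ρ := by
    intro z hz
    have hzr : ‖z - c‖ = r := mem_sphere_iff_norm.1 hz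
    have hzR : z ∈ ball c R := hclosed (sphere_subset_closedBall hz)
    have hfar : ρ ≤ ‖g z - g c‖ := by
      by_contra! hnear
      exact (hr ⟨⟨z, hzR⟩, (mem_closedBall_iff_norm.2 hnear.le), rfl⟩).ne hz
    rw [dslope_of_ne _ (ne_of_mem_sphere hz hr0.ne'), slope_def_field, inv_div, norm_div, hzr]
    gcongr
  have hmax : ‖(dslope g c c)⁻¹‖ ≤ r / ρ :=
    Complex.norm_le_of_forall_mem_frontier_norm_le isBounded_ball
      (hslope.diffContOnCl_ball hclosed) (by rwa [frontier_ball c hr0.ne'])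
      (subset_closure (mem_ball_self hr0))
  have hpos : 0 < ‖deriv g c‖ := norm_pos_iff.2 hderiv
  rw [dslope_same, norm_inv, inv_le_iff_one_le_mul₀ hpos] at hmax
  calc ρ = ρ * 1 := (mul_one ρ).symm
    _ ≤ ρ * (r / ρ * ‖deriv g c‖) := by gcongr
    _ = r * ‖deriv g c‖ := by field_simp
    _ < R * ‖deriv g c‖ := by gcongr

/-! ### Maps `x ↦ f x • x` on the unit ball -/

section LineSlice

variable {X : Type*} [NormedAddCommGroup X] [NormedSpace ℂ X] {f : X → ℂ} {u : X}

/-- The map `x ↦ f x • x` preserves every complex line through the origin; `lineSlice f u` is its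
restriction to the line spanned by `u`, in the coordinate `z ↦ z • u`. -/
def lineSlice (f : X → ℂ) (u : X) (z : ℂ) : ℂ := z * f (z • u)

theorem lineSlice_zero : lineSlice f u 0 = 0 := zero_mul _

theorem apply_smul_smul_eq_lineSlice_smul (z : ℂ) :
    f (z • u) • z • u = lineSlice f u z • u := by
  rw [lineSlice, smul_smul, mul_comm]

theorem mapsTo_smul_ball_zero_one (hu : ‖u‖ = 1) :
    MapsTo (fun z : ℂ => z • u) (ball 0 1) (ball 0 1) := fun z hz => by
  simpa [norm_smul, hu] using hz

theorem differentiableOn_lineSlice (hf : DifferentiableOn ℂ f (ball 0 1)) (hu : ‖u‖ = 1) :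
    DifferentiableOn ℂ (lineSlice f u) (ball 0 1) :=
  differentiableOn_id.fun_mul
    (hf.comp (differentiableOn_id.smul_const u) (mapsTo_smul_ball_zero_one hu))

theorem injOn_lineSlice (hinj : InjOn (fun x => f x • x) (ball 0 1)) (hu : ‖u‖ = 1) :
    InjOn (lineSlice f u) (ball 0 1) := fun x hx y hy hxy => by
  have hu0 : u ≠ 0 := norm_pos_iff.1 (hu ▸ one_pos)
  refine smul_left_injective ℂ hu0
    (hinj (mapsTo_smul_ball_zero_one hu hx) (mapsTo_smul_ball_zero_one hu hy) ?_)
  simp only [apply_smul_smul_eq_lineSlice_smul, hxy]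

theorem deriv_lineSlice_zero (hf : DifferentiableAt ℂ f 0) :
    deriv (lineSlice f u) 0 = f 0 := by
  have hline : DifferentiableAt ℂ (fun z : ℂ => f (z • u)) 0 :=
    DifferentiableAt.comp (0 : ℂ) (by simpa using hf) (by fun_prop)
  have h := ((hasDerivAt_id (0 : ℂ)).fun_mul hline.hasDerivAt).deriv
  simp only [id_eq, zero_smul, one_mul, zero_mul, add_zero] at h
  exact h

theorem smul_mem_image_ball_iff_mem_image_lineSlice (hu : ‖u‖ = 1) {ζ : ℂ} :
    ζ • u ∈ (fun x => f x • x) '' ball 0 1 ↔ ζ ∈ lineSlice f u '' ball 0 1 := by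
  have hu0 : u ≠ 0 := norm_pos_iff.1 (hu ▸ one_pos)
  constructor
  · rintro ⟨x, hx, hxζ⟩
    rcases eq_or_ne (f x) 0 with hfx | hfx
    · have hζ : ζ = 0 := by simpa [hfx, hu0, eq_comm] using hxζ
      exact ⟨0, mem_ball_self one_pos, lineSlice_zero.trans hζ.symm⟩
    · obtain ⟨z, rfl⟩ : ∃ z : ℂ, x = z • u :=
        ⟨(f x)⁻¹ * ζ, by rw [mul_smul, ← hxζ, inv_smul_smul₀ hfx]⟩
      refine ⟨z, by simpa [norm_smul, hu] using hx, smul_left_injective ℂ hu0 ?_⟩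
      exact (apply_smul_smul_eq_lineSlice_smul z).symm.trans hxζ
  · rintro ⟨z, hz, rfl⟩
    exact ⟨z • u, mapsTo_smul_ball_zero_one hu hz, apply_smul_smul_eq_lineSlice_smul z⟩

theorem ball_subset_image_smul_self (hf : DifferentiableOn ℂ f (ball 0 1))
    (hinj : InjOn (fun x => f x • x) (ball 0 1)) :
    ball 0 (‖f 0‖ / 4) ⊆ (fun x => f x • x) '' ball 0 1 := by
  intro w hw
  rcases eq_or_ne w 0 with rfl | hw0
  · exact ⟨0, mem_ball_self one_pos, smul_zero _⟩
  have hu : ‖(‖w‖ : ℂ)⁻¹ • w‖ = 1 := norm_smul_inv_norm hw0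
  have hkoebe := ball_subset_image_ball_of_injOn (differentiableOn_lineSlice hf hu)
    (injOn_lineSlice hinj hu)
  rw [deriv_lineSlice_zero (hf.differentiableAt (ball_mem_nhds 0 one_pos)), lineSlice_zero,
    one_mul] at hkoebe
  rw [← smul_inv_smul₀ (a := (‖w‖ : ℂ)) (by simpa using hw0) w,
    smul_mem_image_ball_iff_mem_image_lineSlice hu]
  exact hkoebe (by simpa using hw)

theorem image_smul_self_ne_univ [Nontrivial X] (hf : DifferentiableOn ℂ f (ball 0 1))
    (hinj : InjOn (fun x => f x • x) (ball 0 1)) (hf0 : f 0 ≠ 0) :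
    (fun x => f x • x) '' ball 0 1 ≠ univ := by
  intro huniv
  obtain ⟨x, hx⟩ := exists_ne (0 : X)
  have hu : ‖(‖x‖ : ℂ)⁻¹ • x‖ = 1 := norm_smul_inv_norm hx
  have hderiv := deriv_lineSlice_zero (u := (‖x‖ : ℂ)⁻¹ • x)
    (hf.differentiableAt (ball_mem_nhds 0 one_pos))
  have hlt := lt_mul_norm_deriv_of_closedBall_subset_image (differentiableOn_lineSlice hf hu)
    (injOn_lineSlice hinj hu) (hderiv ▸ hf0) (norm_pos_iff.2 hf0) fun ζ _ =>
      (smul_mem_image_ball_iff_mem_image_lineSlice hu).1 (huniv ▸ mem_univ _)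
  rw [hderiv, one_mul] at hlt
  exact lt_irrefl _ hlt

theorem hasFDerivAt_smul_self_zero (hf : DifferentiableAt ℂ f 0) :
    HasFDerivAt (fun x => f x • x) (f 0 • ContinuousLinearMap.id ℂ X) 0 :=
  (hf.hasFDerivAt.fun_smul (hasFDerivAt_id 0)).congr_fderiv (by ext; simp)

end LineSlice

theorem le_infDist_frontier_of_ball_subset {E : Type*} [SeminormedAddCommGroup E] [NormedSpace ℝ E]
    {s : Set E} {x : E} {r : ℝ} (hr : 0 < r) (hsub : ball x r ⊆ s) (hs : s ≠ univ) :
    r ≤ infDist x (frontier s) := by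
  have hne : (frontier s).Nonempty :=
    nonempty_frontier_iff.2 ⟨⟨x, hsub (mem_ball_self hr)⟩, hs⟩
  refine (le_infDist hne).2 fun {y} hy => ?_
  by_contra! hlt
  exact hy.2 (interior_maximal hsub isOpen_ball (mem_ball'.2 hlt))

theorem stmt14_general {X : Type*} [NormedAddCommGroup X] [NormedSpace ℂ X] (a : X)
    (f : X → ℂ) (hf : DifferentiableOn ℂ f (ball (0 : X) 1))
    (F : X → X) (hF : ∀ x ∈ ball (0 : X) 1, F x = a + f x • x) (hinj : InjOn F (ball (0 : X) 1)) :
    (1 / 4) * ‖fderiv ℂ F 0‖ ≤ infDist (F 0) (frontier (F '' ball (0 : X) 1)) := by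
  have hball : ball (0 : X) 1 ∈ 𝓝 0 := ball_mem_nhds 0 one_pos
  have hderiv : fderiv ℂ F 0 = f 0 • ContinuousLinearMap.id ℂ X :=
    (((hasFDerivAt_smul_self_zero (hf.differentiableAt hball)).const_add a).congr_of_eventuallyEq
      (eventually_of_mem hball hF)).fderiv
  rcases eq_or_ne (fderiv ℂ F 0) 0 with hzero | hne
  · simpa [hzero] using infDist_nonneg
  have hf0 : f 0 ≠ 0 := fun h => hne (by rw [hderiv, h, zero_smul])
  have : Nontrivial X := not_subsingleton_iff_nontrivial.1 fun _ => hne (Subsingleton.elim _ _)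
  have himage : F '' ball 0 1 = (a + ·) '' ((fun x => f x • x) '' ball 0 1) := by
    rw [image_image]
    exact image_congr hF
  have hinj' : InjOn (fun x => f x • x) (ball 0 1) :=
    (hinj.congr hF).of_comp (g := (a + ·))
  have hF0 : F 0 = a := by rw [hF 0 (mem_of_mem_nhds hball), smul_zero, add_zero]
  rw [hderiv, norm_smul, ContinuousLinearMap.norm_id, mul_one, hF0, himage, one_div_mul_eq_div]
  refine le_infDist_frontier_of_ball_subset (by positivity) ?_ ?_
  · simpa using image_mono (f := (a + ·)) (ball_subset_image_smul_self hf hinj')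
  · exact fun h => image_smul_self_ne_univ hf hinj' hf0 ((add_right_injective a).image_injective
      (h.trans (image_univ_of_surjective (add_left_surjective a)).symm))

/-- **Koebe-type estimate for the distance to the boundary.** Let `F(x) = f(x)·x` be
biholomorphic on the unit ball `𝔹` of a complex Banach space, with `f` holomorphic. Then
`(1/4)·‖DF(0)‖ ≤ dist(F(0), ∂F(𝔹))`. -/
theorem stmt14 {X : Type*} [NormedAddCommGroup X] [NormedSpace ℂ X] [CompleteSpace X]
    (f : X → ℂ) (hf : DifferentiableOn ℂ f (ball (0 : X) 1))
    (F : X → X) (hF : ∀ x ∈ ball (0 : X) 1, F x = f x • x)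
    (hbi : IsBiholoOn F (ball (0 : X) 1)) :
    (1 / 4) * ‖fderiv ℂ F 0‖ ≤ infDist (F 0) (frontier (F '' ball (0 : X) 1)) :=
  stmt14_general 0 f hf F (by simpa using hF) hbi.2.1
end
end

section
/- Let f : 𝔹 → ℂ be holomorphic with f(0) = 1, let F(x) = f(x)·x, and assume ‖F‖_B = 1, where ‖F‖_B = ‖F(0)‖ + sup_{x ∈ 𝔹, x ≠ 0} (1−‖x‖²)·‖DF(x)x‖/‖x‖. Then for every x ∈ 𝔹 with 0 < ‖x‖ ≤ 1/√3 and every l_x ∈ T(x), Re l_x(DF(x)x) ≥ ‖x‖·(1 − √3·‖x‖)/(1 − ‖x‖/√3)³. -/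
open Metric Set

noncomputable section

/-- The Bloch (semi-)norm `‖F‖_B = ‖F(0)‖ + sup_{x ∈ 𝔹, x ≠ 0} (1−‖x‖²)‖DF(x)x‖/‖x‖`
of a holomorphic mapping on the unit ball. -/
def blochNorm {X : Type*} [NormedAddCommGroup X] [NormedSpace ℂ X] (F : X → X) : ℝ :=
  ‖F 0‖ + ⨆ x : {x : X // x ∈ ball (0 : X) 1 ∧ x ≠ 0},
    (1 - ‖x.1‖ ^ 2) * ‖fderiv ℂ F x.1 x.1‖ / ‖x.1‖

/-!
On a complex line through `0` the theorem concerns `h z = l (DF(zu) u)`, which satisfies `h 0 = 1`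
and `(1 - |z|²) |h z| ≤ 1`. Since `|1 - z/√3|² < 1 - |z|²` holds exactly on the open disc with
diameter `[0, √3/2]`, the function `p z = h z * (1 - z/√3)²` maps that disc into the unit disc, with
boundary value `p 0 = 1`. The function `(1 - |z|²) Re h z` is maximal at `0`, which forces
`h'(0) = 0` and hence determines `p'(0)`. Julia's lemma at the boundary point `0` then confines
`p r` to a horodisc, and the leftmost point of the horodisc gives the lower bound for `Re h r`.
-/

lemma one_sub_norm_sq_pos {E : Type*} [SeminormedAddGroup E] {x : E} (hx : ‖x‖ < 1) :
    0 < 1 - ‖x‖ ^ 2 :=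
  sub_pos.mpr (pow_lt_one₀ (norm_nonneg x) hx two_ne_zero)

section DiscAutomorphisms

open ComplexConjugate

variable {a z : ℂ}

/-- The automorphism `z ↦ (z - a) / (1 - conj a * z)` of the unit disc, which moves `a` to
the origin and so reduces the Schwarz–Pick inequality to the Schwarz lemma. -/
def discAut (a z : ℂ) : ℂ := (z - a) / (1 - conj a * z)

lemma one_sub_conj_mul_ne_zero (ha : ‖a‖ < 1) (hz : ‖z‖ < 1) : 1 - conj a * z ≠ 0 := by
  refine sub_ne_zero.mpr fun h ↦ ?_
  have hnorm : ‖a‖ * ‖z‖ = 1 := by simpa using (congrArg norm h).symm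
  exact (mul_lt_one_of_nonneg_of_lt_one_left (norm_nonneg a) ha hz.le).ne hnorm

lemma norm_one_sub_conj_mul_sq_sub_norm_sub_sq (a z : ℂ) :
    ‖1 - conj a * z‖ ^ 2 - ‖z - a‖ ^ 2 = (1 - ‖z‖ ^ 2) * (1 - ‖a‖ ^ 2) := by
  simp only [Complex.sq_norm, Complex.normSq_apply, Complex.sub_re, Complex.sub_im, Complex.mul_re,
    Complex.mul_im, Complex.conj_re, Complex.conj_im, Complex.one_re, Complex.one_im]
  ring

lemma one_sub_norm_discAut_sq (ha : ‖a‖ < 1) (hz : ‖z‖ < 1) :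
    1 - ‖discAut a z‖ ^ 2 = (1 - ‖z‖ ^ 2) * (1 - ‖a‖ ^ 2) / ‖1 - conj a * z‖ ^ 2 := by
  have hden : ‖1 - conj a * z‖ ≠ 0 := norm_ne_zero_iff.mpr (one_sub_conj_mul_ne_zero ha hz)
  rw [discAut, norm_div, ← norm_one_sub_conj_mul_sq_sub_norm_sub_sq, sub_div,
    div_self (pow_ne_zero 2 hden), div_pow]

lemma norm_discAut_lt_one (ha : ‖a‖ < 1) (hz : ‖z‖ < 1) : ‖discAut a z‖ < 1 := by
  have hden : 0 < ‖1 - conj a * z‖ := norm_pos_iff.mpr (one_sub_conj_mul_ne_zero ha hz)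
  have hpos : 0 < 1 - ‖discAut a z‖ ^ 2 := by
    rw [one_sub_norm_discAut_sq ha hz]
    exact div_pos (mul_pos (one_sub_norm_sq_pos hz) (one_sub_norm_sq_pos ha)) (pow_pos hden 2)
  exact lt_of_pow_lt_pow_left₀ 2 zero_le_one (by linarith)

lemma mapsTo_discAut (ha : ‖a‖ < 1) : MapsTo (discAut a) (ball 0 1) (ball 0 1) := fun _ hz ↦
  mem_ball_zero_iff.mpr (norm_discAut_lt_one ha (mem_ball_zero_iff.mp hz))

lemma differentiableOn_discAut (ha : ‖a‖ < 1) : DifferentiableOn ℂ (discAut a) (ball 0 1) :=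
  DifferentiableOn.div (by fun_prop) (by fun_prop) fun _ hz ↦
    one_sub_conj_mul_ne_zero ha (mem_ball_zero_iff.mp hz)

lemma discAut_neg_discAut (ha : ‖a‖ < 1) (hz : ‖z‖ < 1) : discAut (-a) (discAut a z) = z := by
  have hden := one_sub_conj_mul_ne_zero ha hz
  have hden' := one_sub_conj_mul_ne_zero (by rwa [norm_neg]) (norm_discAut_lt_one ha hz) (a := -a)
  have hmul : discAut a z * (1 - conj a * z) = z - a := div_mul_cancel₀ _ hden
  rw [discAut, div_eq_iff hden', map_neg]
  linear_combination hmul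

end DiscAutomorphisms

section SchwarzPick

open ComplexConjugate

variable {p : ℂ → ℂ} {a z : ℂ}

theorem norm_discAut_le_of_mapsTo_ball (hp : DifferentiableOn ℂ p (ball 0 1))
    (hmaps : MapsTo p (ball 0 1) (ball 0 1)) (ha : ‖a‖ < 1) (hz : ‖z‖ < 1) :
    ‖discAut (p a) (p z)‖ ≤ ‖discAut a z‖ := by
  have hpa : ‖p a‖ < 1 := mem_ball_zero_iff.mp (hmaps (mem_ball_zero_iff.mpr ha))
  have hna : ‖-a‖ < 1 := by rwa [norm_neg]
  let g : ℂ → ℂ := discAut (p a) ∘ p ∘ discAut (-a)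
  have hmapsp : MapsTo (p ∘ discAut (-a)) (ball 0 1) (ball 0 1) := hmaps.comp (mapsTo_discAut hna)
  have hg : DifferentiableOn ℂ g (ball 0 1) := (differentiableOn_discAut hpa).comp
    (hp.comp (differentiableOn_discAut hna) (mapsTo_discAut hna)) hmapsp
  have hmapsg : MapsTo g (ball 0 1) (closedBall 0 1) :=
    ((mapsTo_discAut hpa).comp hmapsp).mono_right ball_subset_closedBall
  have hg0 : g 0 = 0 := by simp [g, discAut]
  simpa [g, discAut_neg_discAut ha hz] using
    Complex.norm_le_norm_of_mapsTo_ball hg hmapsg hg0 (norm_discAut_lt_one ha hz)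

theorem schwarz_pick (hp : DifferentiableOn ℂ p (ball 0 1))
    (hmaps : MapsTo p (ball 0 1) (ball 0 1)) (ha : ‖a‖ < 1) (hz : ‖z‖ < 1) :
    ‖1 - conj (p a) * p z‖ ^ 2 * ((1 - ‖z‖ ^ 2) * (1 - ‖a‖ ^ 2)) ≤
      ‖1 - conj a * z‖ ^ 2 * ((1 - ‖p z‖ ^ 2) * (1 - ‖p a‖ ^ 2)) := by
  have hpa : ‖p a‖ < 1 := mem_ball_zero_iff.mp (hmaps (mem_ball_zero_iff.mpr ha))
  have hpz : ‖p z‖ < 1 := mem_ball_zero_iff.mp (hmaps (mem_ball_zero_iff.mpr hz))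
  have hden := norm_pos_iff.mpr (one_sub_conj_mul_ne_zero ha hz)
  have hdenp := norm_pos_iff.mpr (one_sub_conj_mul_ne_zero hpa hpz)
  have h : 1 - ‖discAut a z‖ ^ 2 ≤ 1 - ‖discAut (p a) (p z)‖ ^ 2 := by
    gcongr
    exact norm_discAut_le_of_mapsTo_ball hp hmaps ha hz
  rw [one_sub_norm_discAut_sq ha hz, one_sub_norm_discAut_sq hpa hpz,
    div_le_div_iff₀ (pow_pos hden 2) (pow_pos hdenp 2)] at h
  linarith

end SchwarzPick

section Julia

open ComplexConjugate Filter Topology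

variable {p : ℂ → ℂ} {w : ℂ}

theorem julia_of_tendsto {ι : Type*} {l : Filter ι} [l.NeBot] {a : ι → ℂ} {ζ ω : ℂ} {α : ℝ}
    (hp : DifferentiableOn ℂ p (ball 0 1)) (hmaps : MapsTo p (ball 0 1) (ball 0 1))
    (ha : ∀ᶠ i in l, ‖a i‖ < 1) (haζ : Tendsto a l (𝓝 ζ))
    (hpω : Tendsto (fun i ↦ p (a i)) l (𝓝 ω))
    (hα : Tendsto (fun i ↦ (1 - ‖p (a i)‖ ^ 2) / (1 - ‖a i‖ ^ 2)) l (𝓝 α)) (hw : ‖w‖ < 1) :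
    ‖1 - conj ω * p w‖ ^ 2 * (1 - ‖w‖ ^ 2) ≤ ‖1 - conj ζ * w‖ ^ 2 * ((1 - ‖p w‖ ^ 2) * α) := by
  have hlim {b : ι → ℂ} {ξ : ℂ} (c : ℂ) (hb : Tendsto b l (𝓝 ξ)) :
      Tendsto (fun i ↦ ‖1 - conj (b i) * c‖ ^ 2) l (𝓝 (‖1 - conj ξ * c‖ ^ 2)) :=
    (((((Complex.continuous_conj.tendsto ξ).comp hb).mul_const c).const_sub 1).norm).pow 2
  refine le_of_tendsto_of_tendsto ((hlim (p w) hpω).mul_const _)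
    ((hlim w haζ).mul (hα.const_mul _)) ?_
  filter_upwards [ha] with i hi
  have hpos := one_sub_norm_sq_pos hi
  rw [← mul_div_assoc, ← mul_div_assoc, le_div_iff₀ hpos, mul_assoc]
  exact schwarz_pick hp hmaps hi hw

open scoped RealInnerProductSpace in
lemma tendsto_one_sub_norm_sq_div_one_sub_sq {E : Type*} [NormedAddCommGroup E]
    [InnerProductSpace ℝ E] {q : ℝ → E} {q' : E} (hq : HasDerivWithinAt q q' (Iio 1) 1)
    (hq1 : ‖q 1‖ = 1) :
    Tendsto (fun t ↦ (1 - ‖q t‖ ^ 2) / (1 - t ^ 2)) (𝓝[<] 1) (𝓝 ⟪q 1, q'⟫) := by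
  have hslope : Tendsto (slope (‖q ·‖ ^ 2) 1) (𝓝[<] 1) (𝓝 (2 * ⟪q 1, q'⟫)) :=
    (hasDerivWithinAt_iff_tendsto_slope' self_notMem_Iio).mp hq.norm_sq
  have hadd : Tendsto (fun t : ℝ ↦ 1 + t) (𝓝[<] 1) (𝓝 (1 + 1)) :=
    (tendsto_id.mono_left nhdsWithin_le_nhds).const_add 1
  have hlim := hslope.div hadd (by norm_num)
  rw [show 2 * ⟪q 1, q'⟫ / (1 + 1) = ⟪q 1, q'⟫ by ring] at hlim
  refine hlim.congr fun t ↦ ?_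
  simp only [Pi.div_apply, slope_def_field, hq1]
  rw [div_div, show (t - 1) * (1 + t) = -(1 - t ^ 2) by ring, div_neg, ← neg_div]
  congr 1
  ring

theorem julia_of_hasDerivWithinAt {p' : ℂ} (hp : DifferentiableOn ℂ p (ball 0 1))
    (hmaps : MapsTo p (ball 0 1) (ball 0 1)) (hp' : HasDerivWithinAt p p' (ball 0 1) 1)
    (hp1 : p 1 = 1) (hw : ‖w‖ < 1) :
    ‖1 - p w‖ ^ 2 * (1 - ‖w‖ ^ 2) ≤ ‖1 - w‖ ^ 2 * ((1 - ‖p w‖ ^ 2) * p'.re) := by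
  have hmapsto : MapsTo ((↑) : ℝ → ℂ) (Ioo (-1) 1) (ball 0 1) := fun t ht ↦ by
    simpa using abs_lt.mpr ht
  have hIoo : Ioo (-1 : ℝ) 1 ∈ 𝓝[<] 1 := Ioo_mem_nhdsLT (by norm_num)
  have hmem : ∀ᶠ t : ℝ in 𝓝[<] 1, ‖(t : ℂ)‖ < 1 :=
    mem_of_superset hIoo fun _ ht ↦ mem_ball_zero_iff.mp (hmapsto ht)
  have hq : HasDerivWithinAt (fun t : ℝ ↦ p t) p' (Iio 1) 1 := by
    have hcoe : HasDerivWithinAt ((↑) : ℝ → ℂ) 1 (Ioo (-1) 1) 1 :=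
      Complex.ofRealCLM.hasDerivWithinAt
    have hcomp := hp'.scomp_of_eq (1 : ℝ) hcoe hmapsto Complex.ofReal_one.symm
    rw [one_smul] at hcomp
    exact hcomp.mono_of_mem_nhdsWithin hIoo
  have hlim := tendsto_one_sub_norm_sq_div_one_sub_sq hq (by simp [hp1])
  have h := julia_of_tendsto (ζ := 1) (ω := 1) (α := p'.re) (l := 𝓝[<] (1 : ℝ))
    (a := fun t : ℝ ↦ (t : ℂ)) hp hmaps hmem
    Complex.continuous_ofReal.continuousWithinAt
    (by simpa [hp1] using hq.continuousWithinAt.tendsto)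
    (by simpa [hp1, Complex.inner] using hlim) hw
  simpa using h

lemma div_le_re_of_norm_one_sub_sq_mul_le {z : ℂ} {b c : ℝ} (hb : 0 ≤ b) (hbc : 0 < b + c)
    (h : ‖1 - z‖ ^ 2 * c ≤ b * (1 - ‖z‖ ^ 2)) : (c - b) / (c + b) ≤ z.re := by
  have hsub : ‖1 - z‖ ^ 2 = 1 - 2 * z.re + ‖z‖ ^ 2 := by
    simp only [Complex.sq_norm, Complex.normSq_apply, Complex.sub_re, Complex.sub_im,
      Complex.one_re, Complex.one_im]
    ring
  have hre : z.re ^ 2 ≤ ‖z‖ ^ 2 := sq_le_sq.mpr (by simpa using Complex.abs_re_le_norm z)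
  have hfactor : ((c + b) * z.re - (c - b)) * (z.re - 1) ≤ 0 := by
    nlinarith
  rw [div_le_iff₀' (by linarith)]
  by_contra! hlt
  nlinarith

end Julia

section Bonk

open ComplexConjugate Topology

variable {h : ℂ → ℂ}

lemma deriv_eq_zero_of_one_sub_norm_sq_mul_norm_le_one (hd : DifferentiableAt ℂ h 0)
    (h0 : h 0 = 1) (hb : ∀ᶠ z in 𝓝 0, (1 - ‖z‖ ^ 2) * ‖h z‖ ≤ 1) : deriv h 0 = 0 := by
  have hre := Complex.reCLM.hasFDerivAt.comp (0 : ℂ) (hd.hasDerivAt.hasFDerivAt.restrictScalars ℝ)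
  have hmul := ((hasStrictFDerivAt_norm_sq (0 : ℂ)).hasFDerivAt.const_sub 1).mul hre
  have hmax : IsLocalMax ((fun z : ℂ ↦ 1 - ‖z‖ ^ 2) * (Complex.reCLM ∘ h)) 0 := by
    filter_upwards [hb, ball_mem_nhds (0 : ℂ) one_pos] with z hz hz1
    have hle : (1 - ‖z‖ ^ 2) * (h z).re ≤ (1 - ‖z‖ ^ 2) * ‖h z‖ :=
      mul_le_mul_of_nonneg_left (Complex.re_le_norm _)
        (one_sub_norm_sq_pos (mem_ball_zero_iff.mp hz1)).le
    simpa [h0] using hle.trans hz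
  have hzero := DFunLike.congr_fun (hmax.hasFDerivAt_eq_zero hmul) (conj (deriv h 0))
  have hnormSq : Complex.normSq (deriv h 0) = 0 := by
    simpa [h0, Complex.normSq_apply] using hzero
  exact Complex.normSq_eq_zero.mp hnormSq

/-- The function `z ↦ h z * (1 - z / √3) ^ 2` on the disc with diameter `[0, √3 / 2]`, transported
to the unit disc by `z = √3 / 4 * (1 - w)`, so that `z = 0` becomes the boundary point `w = 1`. -/
def bonkTransform (h : ℂ → ℂ) (w : ℂ) : ℂ := h (√3 / 4 * (1 - w)) * ((3 + w) / 4) ^ 2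

lemma norm_sqrt_three_div_four_mul_sq_add_norm_sq_lt_one {w : ℂ} (hw : ‖w‖ < 1) :
    ‖(√3 / 4 * (1 - w) : ℂ)‖ ^ 2 + ‖(3 + w) / 4‖ ^ 2 < 1 := by
  have hsum : ‖(√3 / 4 * (1 - w) : ℂ)‖ ^ 2 + ‖(3 + w) / 4‖ ^ 2 = (3 + ‖w‖ ^ 2) / 4 := by
    simp only [norm_mul, norm_div, mul_pow, div_pow, Complex.norm_real, Real.norm_eq_abs, sq_abs,
      Real.sq_sqrt zero_le_three, Complex.norm_ofNat]
    simp only [Complex.sq_norm, Complex.normSq_apply, Complex.sub_re, Complex.sub_im,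
      Complex.add_re, Complex.add_im, Complex.one_re, Complex.one_im, Complex.re_ofNat,
      Complex.im_ofNat]
    ring
  linarith [one_sub_norm_sq_pos hw]

lemma norm_sqrt_three_div_four_mul_lt_one {w : ℂ} (hw : ‖w‖ < 1) :
    ‖(√3 / 4 * (1 - w) : ℂ)‖ < 1 :=
  lt_of_pow_lt_pow_left₀ 2 zero_le_one <| by
    linarith [norm_sqrt_three_div_four_mul_sq_add_norm_sq_lt_one hw, sq_nonneg ‖(3 + w) / 4‖]

lemma differentiableOn_bonkTransform (hh : DifferentiableOn ℂ h (ball 0 1)) :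
    DifferentiableOn ℂ (bonkTransform h) (ball 0 1) :=
  (hh.comp (by fun_prop) fun _ hw ↦ mem_ball_zero_iff.mpr
    (norm_sqrt_three_div_four_mul_lt_one (mem_ball_zero_iff.mp hw))).mul (by fun_prop)

lemma mapsTo_bonkTransform (hb : ∀ z ∈ ball (0 : ℂ) 1, (1 - ‖z‖ ^ 2) * ‖h z‖ ≤ 1) :
    MapsTo (bonkTransform h) (ball 0 1) (ball 0 1) := by
  intro w hw
  rw [mem_ball_zero_iff] at hw ⊢
  set z : ℂ := √3 / 4 * (1 - w) with hz
  have hz1 : ‖z‖ < 1 := norm_sqrt_three_div_four_mul_lt_one hw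
  have hlt : ‖(3 + w) / 4‖ ^ 2 < 1 - ‖z‖ ^ 2 := by
    linarith [norm_sqrt_three_div_four_mul_sq_add_norm_sq_lt_one hw]
  rw [bonkTransform, norm_mul, norm_pow, ← hz]
  rcases (norm_nonneg (h z)).eq_or_lt with h0 | hpos
  · simp [← h0]
  · calc ‖h z‖ * ‖(3 + w) / 4‖ ^ 2 < ‖h z‖ * (1 - ‖z‖ ^ 2) := by gcongr
      _ ≤ 1 := by linarith [hb z (mem_ball_zero_iff.mpr hz1)]

lemma bonkTransform_one (h0 : h 0 = 1) : bonkTransform h 1 = 1 := by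
  norm_num [bonkTransform, h0]

lemma hasDerivAt_bonkTransform_one (hd : HasDerivAt h 0 0) (h0 : h 0 = 1) :
    HasDerivAt (bonkTransform h) (1 / 2) 1 := by
  have hz : HasDerivAt (fun w : ℂ ↦ √3 / 4 * (1 - w)) (√3 / 4 * -1) 1 :=
    ((hasDerivAt_id 1).const_sub 1).const_mul _
  have hsq : HasDerivAt (fun w : ℂ ↦ ((3 + w) / 4) ^ 2) (2 * ((3 + 1) / 4) * (1 / 4)) 1 := by
    simpa using (((hasDerivAt_id (1 : ℂ)).const_add 3).div_const 4).fun_pow 2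
  refine ((hd.comp_of_eq 1 hz (by simp)).mul hsq).congr_deriv ?_
  norm_num [h0]

theorem div_le_re_bonkTransform (hh : DifferentiableOn ℂ h (ball 0 1)) (h0 : h 0 = 1)
    (hb : ∀ z ∈ ball (0 : ℂ) 1, (1 - ‖z‖ ^ 2) * ‖h z‖ ≤ 1) {s : ℝ} (hs : |s| < 1) :
    (1 + 3 * s) / (3 + s) ≤ (bonkTransform h s).re := by
  have hs1 : 0 < 1 - s := by linarith [(abs_lt.mp hs).2]
  have hnhds : ball (0 : ℂ) 1 ∈ 𝓝 0 := ball_mem_nhds 0 one_pos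
  have hd : HasDerivAt h 0 0 := by
    have hdiff := hh.differentiableAt hnhds
    have hderiv := deriv_eq_zero_of_one_sub_norm_sq_mul_norm_le_one hdiff h0
      (Filter.eventually_of_mem hnhds hb)
    simpa only [hderiv] using hdiff.hasDerivAt
  have hjulia := julia_of_hasDerivWithinAt (w := s) (differentiableOn_bonkTransform hh)
    (mapsTo_bonkTransform hb) (hasDerivAt_bonkTransform_one hd h0).hasDerivWithinAt
    (bonkTransform_one h0) (by simpa using hs)
  have hs_norm : ‖(s : ℂ)‖ ^ 2 = s ^ 2 := by simp
  have hs_norm' : ‖1 - (s : ℂ)‖ ^ 2 = (1 - s) ^ 2 := by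
    rw [← Complex.ofReal_one, ← Complex.ofReal_sub, Complex.norm_real, Real.norm_eq_abs, sq_abs]
  have hhalf : (1 / 2 : ℂ).re = 1 / 2 := by norm_num
  rw [hs_norm, hs_norm', hhalf] at hjulia
  have hhoro : ‖1 - bonkTransform h s‖ ^ 2 * (2 * (1 + s)) ≤
      (1 - s) * (1 - ‖bonkTransform h s‖ ^ 2) :=
    le_of_mul_le_mul_left (by linarith) hs1
  convert div_le_re_of_norm_one_sub_sq_mul_le hs1.le (by linarith [(abs_lt.mp hs).1]) hhoro
    using 2 <;> ring

theorem bonk_distortion (hh : DifferentiableOn ℂ h (ball 0 1)) (h0 : h 0 = 1)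
    (hb : ∀ z ∈ ball (0 : ℂ) 1, (1 - ‖z‖ ^ 2) * ‖h z‖ ≤ 1) {r : ℝ} (hr : 0 < r)
    (hr' : r < √3 / 2) : (1 - √3 * r) / (1 - r / √3) ^ 3 ≤ (h r).re := by
  have hsqrt : √3 ^ 2 = 3 := Real.sq_sqrt zero_le_three
  have hsqrt_pos : 0 < √3 := Real.sqrt_pos.mpr zero_lt_three
  obtain ⟨s, rfl⟩ : ∃ s, r = √3 / 4 * (1 - s) := ⟨1 - 4 * r / √3, by field_simp; ring⟩
  have hs : |s| < 1 := abs_lt.mpr ⟨by nlinarith, by nlinarith⟩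
  have hs3 : 0 < (3 + s) / 4 := by linarith [(abs_lt.mp hs).1]
  have hre : (bonkTransform h s).re = (h (√3 / 4 * (1 - s) : ℝ)).re * ((3 + s) / 4) ^ 2 := by
    rw [← Complex.re_mul_ofReal, bonkTransform]
    push_cast
    rfl
  have hnum : 1 - √3 * (√3 / 4 * (1 - s)) = (1 + 3 * s) / 4 := by
    linear_combination -(1 - s) / 4 * hsqrt
  have hden : 1 - √3 / 4 * (1 - s) / √3 = (3 + s) / 4 := by field_simp; ring
  calc (1 - √3 * (√3 / 4 * (1 - s))) / (1 - √3 / 4 * (1 - s) / √3) ^ 3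
    _ = (1 + 3 * s) / (3 + s) / ((3 + s) / 4) ^ 2 := by
      rw [hnum, hden]
      field_simp
    _ ≤ (h (√3 / 4 * (1 - s) : ℝ)).re := by
      rw [div_le_iff₀ (pow_pos hs3 2), ← hre]
      exact div_le_re_bonkTransform hh h0 hb hs

end Bonk

section NormedSpace

open Topology

variable {X Y : Type*} [NormedAddCommGroup X] [NormedSpace ℂ X] [NormedAddCommGroup Y]
  [NormedSpace ℂ Y]

/- An unbounded supremum has the value `0` in `blochNorm`; `blochNorm F ≠ ‖F 0‖` rules this out. -/
lemma one_sub_norm_sq_mul_norm_fderiv_le {F : X → X} (hF : blochNorm F ≠ ‖F 0‖) {x : X}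
    (hx : x ∈ ball 0 1) :
    (1 - ‖x‖ ^ 2) * ‖fderiv ℂ F x x‖ ≤ (blochNorm F - ‖F 0‖) * ‖x‖ := by
  rcases eq_or_ne x 0 with rfl | hx0
  · simp
  have hbdd : BddAbove (range fun x : {x : X // x ∈ ball (0 : X) 1 ∧ x ≠ 0} ↦
      (1 - ‖x.1‖ ^ 2) * ‖fderiv ℂ F x.1 x.1‖ / ‖x.1‖) := by
    by_contra hunbdd
    exact hF (by rw [blochNorm, Real.iSup_of_not_bddAbove hunbdd, add_zero])
  rw [← div_le_iff₀ (norm_pos_iff.mpr hx0), blochNorm, add_sub_cancel_left]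
  exact le_ciSup hbdd ⟨x, hx, hx0⟩

lemma fderiv_zero_of_eventuallyEq_smul_self {f : X → ℂ} {F : X → X} (hf : DifferentiableAt ℂ f 0)
    (hF : F =ᶠ[𝓝 0] fun x ↦ f x • x) : fderiv ℂ F 0 = f 0 • ContinuousLinearMap.id ℂ X := by
  have hsmul : HasFDerivAt (fun x ↦ f x • x) _ 0 := hf.hasFDerivAt.fun_smul (hasFDerivAt_id 0)
  rw [hF.fderiv_eq, hsmul.fderiv]
  simp

lemma differentiableOn_fderiv_smul_apply {F : X → ℂ} (hF : DifferentiableOn ℂ F (ball 0 1)) {u : X}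
    (hu : ‖u‖ ≤ 1) : DifferentiableOn ℂ (fun z : ℂ ↦ fderiv ℂ F (z • u) u) (ball 0 1) := by
  have hderiv : ∀ z ∈ ball (0 : ℂ) 1,
      HasDerivAt (fun z : ℂ ↦ F (z • u)) (fderiv ℂ F (z • u) u) z := by
    intro z hz
    have hzu : z • u ∈ ball (0 : X) 1 := by
      rw [mem_ball_zero_iff] at hz
      rw [mem_ball_zero_iff, norm_smul]
      exact mul_lt_one_of_nonneg_of_lt_one_left (norm_nonneg z) hz hu
    have hline : HasDerivAt (fun z : ℂ ↦ z • u) u z := by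
      simpa using (hasDerivAt_id z).smul_const u
    exact (hF.hasFDerivAt (isOpen_ball.mem_nhds hzu)).comp_hasDerivAt z hline
  have hdiff : DifferentiableOn ℂ (fun z : ℂ ↦ F (z • u)) (ball 0 1) := fun z hz ↦
    (hderiv z hz).differentiableAt.differentiableWithinAt
  exact (hdiff.deriv isOpen_ball).congr fun z hz ↦ (hderiv z hz).deriv.symm

theorem bonk_distortion_radial {F : X → ℂ} (hF : DifferentiableOn ℂ F (ball 0 1))
    (hb : ∀ y ∈ ball (0 : X) 1, (1 - ‖y‖ ^ 2) * ‖fderiv ℂ F y y‖ ≤ ‖y‖)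
    {x : X} (hx : ‖x‖ < √3 / 2) (h0 : fderiv ℂ F 0 x = ‖x‖) :
    ‖x‖ * (1 - √3 * ‖x‖) / (1 - ‖x‖ / √3) ^ 3 ≤ (fderiv ℂ F x x).re := by
  rcases eq_or_ne x 0 with rfl | hx0
  · simp
  have hnorm : (‖x‖ : ℂ) ≠ 0 := by simpa using hx0
  obtain ⟨u, hu, hux⟩ : ∃ u : X, ‖u‖ = 1 ∧ (‖x‖ : ℂ) • u = x :=
    ⟨(‖x‖ : ℂ)⁻¹ • x, norm_smul_inv_norm hx0, smul_inv_smul₀ hnorm x⟩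
  have hu0 : fderiv ℂ F ((0 : ℂ) • u) u = 1 := by
    refine mul_left_cancel₀ hnorm ?_
    rw [← smul_eq_mul, ← map_smul, hux, zero_smul, h0, mul_one]
  have hbu : ∀ z ∈ ball (0 : ℂ) 1, (1 - ‖z‖ ^ 2) * ‖fderiv ℂ F (z • u) u‖ ≤ 1 := by
    intro z hz
    rcases eq_or_ne z 0 with rfl | hz0
    · rw [hu0]
      simp
    have hzu : ‖z • u‖ = ‖z‖ := by rw [norm_smul, hu, mul_one]
    have hbz := hb (z • u) (by rwa [mem_ball_zero_iff, hzu, ← mem_ball_zero_iff])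
    rw [hzu, map_smul, norm_smul, mul_left_comm] at hbz
    exact (mul_le_iff_le_one_right (norm_pos_iff.mpr hz0)).mp hbz
  have hbonk := bonk_distortion (differentiableOn_fderiv_smul_apply hF hu.le) hu0 hbu
    (norm_pos_iff.mpr hx0) hx
  calc ‖x‖ * (1 - √3 * ‖x‖) / (1 - ‖x‖ / √3) ^ 3
    _ ≤ ‖x‖ * (fderiv ℂ F ((‖x‖ : ℂ) • u) u).re := by
      rw [mul_div_assoc]
      exact mul_le_mul_of_nonneg_left hbonk (norm_nonneg x)
    _ = (fderiv ℂ F ((‖x‖ : ℂ) • u) ((‖x‖ : ℂ) • u)).re := by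
      rw [map_smul, smul_eq_mul, Complex.re_ofReal_mul]
    _ = (fderiv ℂ F x x).re := by rw [hux]

theorem stmt15_general {F : X → Y} (hF : DifferentiableOn ℂ F (ball 0 1))
    (hb : ∀ y ∈ ball (0 : X) 1, (1 - ‖y‖ ^ 2) * ‖fderiv ℂ F y y‖ ≤ ‖y‖)
    {x : X} (hx : ‖x‖ < √3 / 2) {l : Y →L[ℂ] ℂ} (hl : ‖l‖ ≤ 1)
    (hlx : l (fderiv ℂ F 0 x) = ‖x‖) :
    ‖x‖ * (1 - √3 * ‖x‖) / (1 - ‖x‖ / √3) ^ 3 ≤ (l (fderiv ℂ F x x)).re := by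
  have hfderiv (y v : X) (hy : y ∈ ball 0 1) : fderiv ℂ (l ∘ F) y v = l (fderiv ℂ F y v) :=
    DFunLike.congr_fun (l.hasFDerivAt.comp y (hF.hasFDerivAt (isOpen_ball.mem_nhds hy))).fderiv v
  have hx1 : ‖x‖ < 1 := by nlinarith [Real.sq_sqrt zero_le_three, Real.sqrt_nonneg 3]
  rw [← hfderiv x x (mem_ball_zero_iff.mpr hx1)]
  refine bonk_distortion_radial (l.differentiable.comp_differentiableOn hF) (fun y hy ↦ ?_) hx
    (by rw [hfderiv 0 x (mem_ball_self one_pos), hlx])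
  have hpos := one_sub_norm_sq_pos (mem_ball_zero_iff.mp hy)
  calc (1 - ‖y‖ ^ 2) * ‖fderiv ℂ (l ∘ F) y y‖
    _ ≤ (1 - ‖y‖ ^ 2) * ‖fderiv ℂ F y y‖ := by
      rw [hfderiv y y hy]
      exact mul_le_mul_of_nonneg_left (l.le_of_opNorm_le_of_le hl le_rfl |>.trans_eq (one_mul _))
        hpos.le
    _ ≤ ‖y‖ := hb y hy

end NormedSpace

lemma one_div_sqrt_three_lt_sqrt_three_div_two : 1 / √3 < √3 / 2 := by
  rw [div_lt_div_iff₀ (by positivity) two_pos, Real.mul_self_sqrt zero_le_three]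
  norm_num

/-- **Bonk-type distortion theorem.** Let `F(x) = f(x)·x` on the unit ball `𝔹` of a complex
Banach space, with `f` holomorphic, `f(0) = 1` and `‖F‖_B = 1`. Then for every `x` with
`0 < ‖x‖ ≤ 1/√3` and every `l_x ∈ T(x)`,
`Re l_x(DF(x)x) ≥ ‖x‖(1 − √3‖x‖)/(1 − ‖x‖/√3)³`. -/
theorem stmt15 {X : Type*} [NormedAddCommGroup X] [NormedSpace ℂ X] [CompleteSpace X]
    (f : X → ℂ) (hf : DifferentiableOn ℂ f (ball (0 : X) 1)) (hf0 : f 0 = 1)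
    (F : X → X) (hF : ∀ x ∈ ball (0 : X) 1, F x = f x • x)
    (hB : blochNorm F = 1) :
    ∀ x : X, 0 < ‖x‖ → ‖x‖ ≤ 1 / Real.sqrt 3 →
      ∀ l : X →L[ℂ] ℂ, l x = (‖x‖ : ℂ) → ‖l‖ = 1 →
        ‖x‖ * (1 - Real.sqrt 3 * ‖x‖) / (1 - ‖x‖ / Real.sqrt 3) ^ 3
          ≤ (l (fderiv ℂ F x x)).re := by
  intro x _ hx l hlx hl
  have hF0 : F 0 = 0 := by simpa using hF 0 (mem_ball_self one_pos)
  have hnhds : ball (0 : X) 1 ∈ nhds 0 := ball_mem_nhds 0 one_pos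
  have hDF0 := fderiv_zero_of_eventuallyEq_smul_self (hf.differentiableAt hnhds)
    (Filter.eventually_of_mem hnhds hF)
  have hb (y : X) (hy : y ∈ ball 0 1) : (1 - ‖y‖ ^ 2) * ‖fderiv ℂ F y y‖ ≤ ‖y‖ := by
    simpa [hB, hF0] using one_sub_norm_sq_mul_norm_fderiv_le (F := F) (by simp [hB, hF0]) hy
  exact stmt15_general ((hf.smul differentiableOn_id).congr hF) hb
    (hx.trans_lt one_div_sqrt_three_lt_sqrt_three_div_two) hl.le (by simp [hDF0, hf0, hlx])
end
end
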